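/- Let s > 0 be the unique real number with ∑_{i=1}^m λ^{p_i·s} = 1 (the similarity dimension of E). Then the Hausdorff dimension of E equals s if and only if the open set condition holds for {S_i}_{i=1}^m. -/

import Mathlib

open Polynomial Filter

noncomputable section

namespace PVOSC

variable {m : ℕ}

/-- `λ⁻¹` is a Pisot (P.V.) number: an algebraic integer `> 1` all of whose
Galois conjugates other than itself have complex absolute value `< 1`. -/
def IsPisot (θ : ℝ) : Prop :=
  1 < θ ∧ IsIntegral ℤ θ ∧
    ∀ z : ℂ, aeval z (minpoly ℤ θ) = 0 → z ≠ (θ : ℂ) → ‖z‖ < 1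

/-- `p_σ` for a finite word `σ`. -/
def wordP (p : Fin m → ℕ) (σ : List (Fin m)) : ℕ := (σ.map p).sum

/-- The contracting similitude `S_i(x) = λ^{p_i} x + b_i`. -/
def Smap (lam : ℝ) (p : Fin m → ℕ) (b : Fin m → ℝ) (i : Fin m) : ℝ → ℝ :=
  fun x => lam ^ p i * x + b i

/-- `S_σ = S_{i₁} ∘ ⋯ ∘ S_{i_k}` for `σ = i₁ ⋯ i_k`. -/
def SW (lam : ℝ) (p : Fin m → ℕ) (b : Fin m → ℝ) (σ : List (Fin m)) : ℝ → ℝ :=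
  σ.foldr (fun i f => Smap lam p b i ∘ f) id

/-- `b_σ`, the translation part of `S_σ`. -/
def wordB (lam : ℝ) (p : Fin m → ℕ) (b : Fin m → ℝ) (σ : List (Fin m)) : ℝ :=
  SW lam p b σ 0

/-- `B = {0, b₁, …, b_m}`. -/
def Bset (b : Fin m → ℝ) : Set ℝ := insert 0 (Set.range b)

/-- `B − B`. -/
def BB (b : Fin m → ℝ) : Set ℝ := {x | ∃ u ∈ Bset b, ∃ v ∈ Bset b, x = u - v}

/-- `max_i |b_i|`. -/
def bmax (b : Fin m → ℝ) : ℝ := ⨆ i, |b i|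

/-- The set `𝒞`. -/
def Cset (lam : ℝ) (b : Fin m → ℝ) (T : ℕ) : Set ℝ :=
  {x | |x| ≤ (1 + lam ^ (1 - (T : ℤ))) * bmax b / (1 - lam) ∧
    ∃ R : ℝ[X], (∀ n, R.coeff n ∈ BB b) ∧ lam ^ (2 - (T : ℤ)) * x = R.eval lam⁻¹}

/-- The vertex set `Ξ = {n ∈ ℤ : |n| ≤ T−1} × 𝒞`. -/
def Xi (lam : ℝ) (b : Fin m → ℝ) (T : ℕ) : Set (ℤ × ℝ) :=
  {v | |v.1| ≤ (T : ℤ) - 1 ∧ v.2 ∈ Cset lam b T}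

/-- The open set condition. -/
def OSC (lam : ℝ) (p : Fin m → ℕ) (b : Fin m → ℝ) : Prop :=
  ∃ U : Set ℝ, U.Nonempty ∧ IsOpen U ∧ (⋃ i, Smap lam p b i '' U) ⊆ U ∧
    ∀ i j : Fin m, i ≠ j → Smap lam p b i '' U ∩ Smap lam p b j '' U = ∅

/-- The strong separation condition for the attractor `E`. -/
def SSC (lam : ℝ) (p : Fin m → ℕ) (b : Fin m → ℝ) (E : Set ℝ) : Prop :=
  ∀ i j : Fin m, i ≠ j → Smap lam p b i '' E ∩ Smap lam p b j '' E = ∅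

/-- Group law on `ℤ × ℝ`: `(p₁,c₁)·(p₂,c₂) = (p₁+p₂, λ^{p₁} c₂ + c₁)`. -/
def gmul (lam : ℝ) (u v : ℤ × ℝ) : ℤ × ℝ := (u.1 + v.1, lam ^ u.1 * v.2 + u.2)

/-- Inverse for the group law: `(p,c)⁻¹ = (−p, −λ^{−p} c)`. -/
def ginv (lam : ℝ) (u : ℤ × ℝ) : ℤ × ℝ := (-u.1, -(lam ^ (-u.1) * u.2))

/-- The group element `(p_σ, b_σ)` associated to a finite word `σ`. -/
def elem (lam : ℝ) (p : Fin m → ℕ) (b : Fin m → ℝ) (σ : List (Fin m)) : ℤ × ℝ :=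
  ((wordP p σ : ℤ), wordB lam p b σ)

/-- The sequence `(q_k, c_k)` with the recursive structure w.r.t. `({α_k}, {β_k})`:
`recSeq … k = (q_{k+1}, c_{k+1})`, i.e. index `k` corresponds to `(q_{k+1}, c_{k+1})`. -/
def recSeq (lam : ℝ) (p : Fin m → ℕ) (b : Fin m → ℝ) (α β : ℕ → List (Fin m)) : ℕ → ℤ × ℝ
  | 0 => gmul lam (ginv lam (elem lam p b (β 0))) (elem lam p b (α 0))
  | (k+1) => gmul lam (ginv lam (elem lam p b (β (k+1))))
      (gmul lam (recSeq lam p b α β k) (elem lam p b (α (k+1))))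

/-- The edge relation of the directed graph `G` on `Ξ`. -/
def edge (lam : ℝ) (p : Fin m → ℕ) (b : Fin m → ℝ) (T : ℕ) (u v : ℤ × ℝ) : Prop :=
  u ∈ Xi lam b T ∧ v ∈ Xi lam b T ∧
    ∃ α β : List (Fin m), 1 ≤ wordP p α ∧ wordP p α ≤ 2 * T - 1 ∧
      1 ≤ wordP p β ∧ wordP p β ≤ 2 * T - 1 ∧
      v.1 = (wordP p α : ℤ) + u.1 - (wordP p β : ℤ) ∧
      v.2 = lam ^ (-(wordP p β : ℤ)) * u.2 + lam ^ (u.1 - (wordP p β : ℤ)) * wordB lam p b α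
        - lam ^ (-(wordP p β : ℤ)) * wordB lam p b β

/-- `Λ = Ξ ∩ {(p_j − p_i, λ^{−p_i}(b_j − b_i)) : i ≠ j}`. -/
def Lam (lam : ℝ) (p : Fin m → ℕ) (b : Fin m → ℝ) (T : ℕ) : Set (ℤ × ℝ) :=
  Xi lam b T ∩ {v | ∃ i j : Fin m, i ≠ j ∧
    v = ((p j : ℤ) - (p i : ℤ), lam ^ (-(p i : ℤ)) * (b j - b i))}

/-- The length-`k` prefix of an infinite word `ω`. -/
def prefixList (ω : ℕ → Fin m) (k : ℕ) : List (Fin m) := (List.range k).map ω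

/-!
If two distinct words `α`, `β` gave the same map, then `αβ` and `βα` would be distinct words of the
same length giving the same map; dropping one of them from the cover of `E` by pieces of that length
leaves a Moran sum `< 1` at `s`, so `dim E < s`. Hence `dim E = s` excludes exact overlaps, and the
open set condition clearly does too.

For a Pisot number `λ⁻¹` and rational translations, exact overlaps are the only obstruction to
separation (Garsia's lemma): differences of translation parts, rescaled to unit size, are up to a
fixed factor values at `λ⁻¹` of integer polynomials with bounded coefficients. The other conjugates
of `λ⁻¹` lie in the open unit disc, so all conjugates of such a value are bounded and only finitely
many values occur. Thus without exact overlaps a set of diameter `O(λⁿ)` meets boundedly many pieces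
of size about `λⁿ`.

This finite clustering gives `dim E ≥ s` by the mass distribution principle for the image of the
Bernoulli measure with weights `λ^{p_i s}`. It also gives the open set condition (Bandt–Graf,
Schief): a piece with the maximal number of neighbours acquires no new ones when it is mapped into
`E`, so it stays away from `H`, the union of the neighbour copies `(S_i S_τ)⁻¹ S_j E` with `i ≠ j`,
and the open set `{x | d(x, E) < d(x, H)}` is nonempty.
-/

open MeasureTheory Topology
open scoped NNReal ENNReal

section WordMap

variable {ι X : Type*} {f : ι → X → X} {E : Set X}

/-- The composition `f i₁ ∘ ⋯ ∘ f i_k` of a family of self-maps along the word `i₁ ⋯ i_k`.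
`SW lam p b` unfolds to `wordMap (Smap lam p b)`. -/
def wordMap (f : ι → X → X) (σ : List ι) : X → X := σ.foldr (fun i g => f i ∘ g) id

lemma wordMap_append (f : ι → X → X) (σ τ : List ι) (x : X) :
    wordMap f (σ ++ τ) x = wordMap f σ (wordMap f τ x) := by
  induction σ with
  | nil => rfl
  | cons i σ ih => exact congrArg (f i) ih

lemma mapsTo_wordMap (hE : ∀ i, Set.MapsTo (f i) E E) (σ : List ι) :
    Set.MapsTo (wordMap f σ) E E := by
  induction σ with
  | nil => exact Set.mapsTo_id E
  | cons i σ ih => exact (hE i).comp ih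

lemma exists_address (hE : E ⊆ ⋃ i, f i '' E) {x : X} (hx : x ∈ E) :
    ∃ ω : ℕ → ι, ∀ n, x ∈ wordMap f ((List.range n).map ω) '' E := by
  have step : ∀ y : E, ∃ i, ∃ z : E, f i z = y := fun y => by
    obtain ⟨i, z, hz, hzy⟩ := Set.mem_iUnion.1 (hE y.2)
    exact ⟨i, ⟨z, hz⟩, hzy⟩
  choose letter tail h_tail using step
  refine ⟨fun n => letter (tail^[n] ⟨x, hx⟩), fun n => ⟨tail^[n] ⟨x, hx⟩, Subtype.coe_prop _, ?_⟩⟩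
  induction n with
  | zero => rfl
  | succ n ih =>
    rw [List.range_succ, List.map_append, wordMap_append, Function.iterate_succ_apply']
    exact (congrArg _ (h_tail _)).trans ih

lemma subset_iUnion_wordMap (hE : E ⊆ ⋃ i, f i '' E) (n : ℕ) :
    E ⊆ ⋃ w : Fin n → ι, wordMap f (List.ofFn w) '' E := fun x hx => by
  obtain ⟨ω, hω⟩ := exists_address hE hx
  refine Set.mem_iUnion.2 ⟨fun k => ω k, ?_⟩
  have h_ofFn : List.ofFn (fun k : Fin n => ω k) = (List.range n).map ω := by
    rw [List.ofFn_eq_map, ← List.map_coe_finRange_eq_range, List.map_map]; rfl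
  exact h_ofFn ▸ hω n

lemma lipschitzWith_wordMap [PseudoEMetricSpace X] {r : ι → ℝ≥0}
    (hf : ∀ i, LipschitzWith (r i) (f i)) (σ : List ι) :
    LipschitzWith (σ.map r).prod (wordMap f σ) := by
  induction σ with
  | nil => exact LipschitzWith.id
  | cons i σ ih => rw [List.map_cons, List.prod_cons]; exact (hf i).comp ih

lemma lipschitzWith_wordMap_ofFn [PseudoEMetricSpace X] {r : ι → ℝ≥0}
    (hf : ∀ i, LipschitzWith (r i) (f i)) {n : ℕ} (w : Fin n → ι) :
    LipschitzWith (∏ k, r (w k)) (wordMap f (List.ofFn w)) := by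
  simpa only [List.map_ofFn, List.prod_ofFn, Function.comp_apply] using
    lipschitzWith_wordMap hf (List.ofFn w)

end WordMap

section UpperBound

variable {ι X : Type*} [Fintype ι] [EMetricSpace X] {f : ι → X → X} {r : ι → ℝ≥0} {E : Set X}

lemma sum_prod_rpow (r : ι → ℝ≥0) (t : ℝ) (n : ℕ) :
    ∑ w : Fin n → ι, (∏ k, r (w k)) ^ t = (∑ i, r i ^ t) ^ n := by
  simp only [Fintype.sum_pow, NNReal.finsetProd_rpow]

lemma hausdorffMeasure_le_ediam_rpow [MeasurableSpace X] [BorelSpace X]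
    (hf : ∀ i, LipschitzWith (r i) (f i)) (hr : ∀ i, r i < 1) (hE : Metric.ediam E ≠ ⊤)
    (hcover : E ⊆ ⋃ i, f i '' E) {t : ℝ≥0} (hsum : ∑ i, r i ^ (t : ℝ) ≤ 1) :
    Measure.hausdorffMeasure t E ≤ Metric.ediam E ^ (t : ℝ) := by
  set q : ℝ≥0 := Finset.univ.sup r
  have hq : q < 1 := (Finset.sup_lt_iff one_pos).2 fun i _ => hr i
  have prod_le (n : ℕ) (w : Fin n → ι) : ∏ k, r (w k) ≤ q ^ n := by
    simpa using Finset.prod_le_pow_card Finset.univ (fun k => r (w k)) q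
      fun k _ => Finset.le_sup (Finset.mem_univ (w k))
  have scale_tendsto :
      Tendsto (fun n : ℕ => ((q ^ n : ℝ≥0) : ℝ≥0∞) * Metric.ediam E) atTop (𝓝 0) := by
    have := ENNReal.tendsto_coe.2 (NNReal.tendsto_pow_atTop_nhds_zero_of_lt_one hq)
    simpa using ENNReal.Tendsto.mul_const this (Or.inr hE)
  have sum_le (n : ℕ) :
      ∑ w : Fin n → ι, Metric.ediam (wordMap f (List.ofFn w) '' E) ^ (t : ℝ)
        ≤ Metric.ediam E ^ (t : ℝ) :=
    calc ∑ w : Fin n → ι, Metric.ediam (wordMap f (List.ofFn w) '' E) ^ (t : ℝ)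
        ≤ ∑ w : Fin n → ι,
            (((∏ k, r (w k)) ^ (t : ℝ) : ℝ≥0) : ℝ≥0∞) * Metric.ediam E ^ (t : ℝ) := by
          gcongr with w
          rw [ENNReal.coe_rpow_of_nonneg _ t.coe_nonneg,
            ← ENNReal.mul_rpow_of_nonneg _ _ t.coe_nonneg]
          gcongr
          exact (lipschitzWith_wordMap_ofFn hf w).ediam_image_le E
      _ = (((∑ i, r i ^ (t : ℝ)) ^ n : ℝ≥0) : ℝ≥0∞) * Metric.ediam E ^ (t : ℝ) := by
          rw [← Finset.sum_mul, ← ENNReal.ofNNReal_finsetSum, sum_prod_rpow]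
      _ ≤ Metric.ediam E ^ (t : ℝ) :=
          mul_le_of_le_one_left' (ENNReal.coe_le_one_iff.2 (pow_le_one₀ zero_le hsum))
  calc Measure.hausdorffMeasure t E
      ≤ liminf (fun n => ∑ w : Fin n → ι,
          Metric.ediam (wordMap f (List.ofFn w) '' E) ^ (t : ℝ)) atTop :=
        Measure.hausdorffMeasure_le_liminf_sum _ E _ scale_tendsto _
          (.of_forall fun n w => ((lipschitzWith_wordMap_ofFn hf w).ediam_image_le E).trans
            (by gcongr; exact prod_le n w))
          (.of_forall (subset_iUnion_wordMap hcover))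
    _ ≤ Metric.ediam E ^ (t : ℝ) :=
        (liminf_le_liminf (.of_forall sum_le)).trans_eq (liminf_const _)

lemma dimH_le_of_subset_iUnion_image (hf : ∀ i, LipschitzWith (r i) (f i)) (hr : ∀ i, r i < 1)
    (hE : Metric.ediam E ≠ ⊤) (hcover : E ⊆ ⋃ i, f i '' E) {t : ℝ≥0}
    (hsum : ∑ i, r i ^ (t : ℝ) ≤ 1) : dimH E ≤ t := by
  borelize X
  exact dimH_le_of_hausdorffMeasure_ne_top <| ne_top_of_le_ne_top
    (ENNReal.rpow_ne_top_of_nonneg t.coe_nonneg hE)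
    (hausdorffMeasure_le_ediam_rpow hf hr hE hcover hsum)

lemma dimH_lt_of_subset_iUnion_image (hf : ∀ i, LipschitzWith (r i) (f i)) (hr : ∀ i, r i < 1)
    (hE : Metric.ediam E ≠ ⊤) (hcover : E ⊆ ⋃ i, f i '' E) {s : ℝ≥0} (hs : 0 < s)
    (hsum : ∑ i, r i ^ (s : ℝ) < 1) : dimH E < s := by
  have sum_continuousAt : ContinuousAt (fun t : ℝ≥0 => ∑ i, r i ^ (t : ℝ)) s :=
    tendsto_finsetSum _ fun i _ => ContinuousAt.comp (g := fun q : ℝ≥0 × ℝ => q.1 ^ q.2)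
      (f := fun t : ℝ≥0 => (r i, (t : ℝ)))
      (NNReal.continuousAt_rpow (Or.inr hs)) (by fun_prop)
  have : (𝓝[<] s).NeBot := nhdsLT_neBot_of_exists_lt ⟨0, hs⟩
  obtain ⟨t, hts, hsum_t⟩ := ((eventually_mem_nhdsWithin (s := Set.Iio s)).and
    ((sum_continuousAt.eventually_lt_const hsum).filter_mono nhdsWithin_le_nhds)).exists
  exact (dimH_le_of_subset_iUnion_image hf hr hE hcover hsum_t.le).trans_lt
    (ENNReal.coe_lt_coe.2 hts)

lemma sum_ne_prod_rpow_lt (hr : ∀ i, 0 < r i) {s : ℝ} (hsum : ∑ i, r i ^ s = 1) {n : ℕ}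
    (w : Fin n → ι) [Fintype {u // u ≠ w}] :
    ∑ u : {u // u ≠ w}, (∏ k, r (u.1 k)) ^ s < 1 := by
  classical
  calc ∑ u : {u // u ≠ w}, (∏ k, r (u.1 k)) ^ s
      = ∑ u ∈ Finset.univ.erase w, (∏ k, r (u k)) ^ s := by
        rw [Finset.sum_subtype (p := (· ≠ w)) (Finset.univ.erase w) fun u => by simp]
    _ < ∑ u : Fin n → ι, (∏ k, r (u k)) ^ s :=
        Finset.sum_erase_lt_of_pos (Finset.mem_univ w)
          (NNReal.rpow_pos (Finset.prod_pos fun k _ => hr (w k)))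
    _ = 1 := by rw [sum_prod_rpow, hsum, one_pow]

lemma dimH_lt_of_wordMap_image_eq (hf : ∀ i, LipschitzWith (r i) (f i)) (hr₀ : ∀ i, 0 < r i)
    (hr : ∀ i, r i < 1) (hE : Metric.ediam E ≠ ⊤) (hcover : E ⊆ ⋃ i, f i '' E)
    {s : ℝ≥0} (hs : 0 < s) (hsum : ∑ i, r i ^ (s : ℝ) = 1) {n : ℕ} {v w : Fin n → ι}
    (hvw : v ≠ w) (himage : wordMap f (List.ofFn v) '' E = wordMap f (List.ofFn w) '' E) :
    dimH E < s := by
  classical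
  obtain ⟨k₀, -⟩ := Function.ne_iff.1 hvw
  have ratio_lt_one (u : Fin n → ι) : ∏ k, r (u k) < 1 :=
    (Finset.prod_lt_prod_of_nonempty (fun k _ => hr₀ (u k)) (fun k _ => hr (u k))
      ⟨k₀, Finset.mem_univ k₀⟩).trans_eq Finset.prod_const_one
  have cover_without : E ⊆ ⋃ u : {u // u ≠ w}, wordMap f (List.ofFn u.1) '' E := fun x hx => by
    obtain ⟨u, hu⟩ := Set.mem_iUnion.1 (subset_iUnion_wordMap hcover n hx)
    by_cases huw : u = w
    · exact Set.mem_iUnion.2 ⟨⟨v, hvw⟩, by rwa [himage, ← huw]⟩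
    · exact Set.mem_iUnion.2 ⟨⟨u, huw⟩, hu⟩
  exact dimH_lt_of_subset_iUnion_image (fun u : {u // u ≠ w} => lipschitzWith_wordMap_ofFn hf u.1)
    (fun u => ratio_lt_one u.1) hE cover_without hs (sum_ne_prod_rpow_lt hr₀ hsum w)

end UpperBound

section MassDistribution

variable {X : Type*} [EMetricSpace X] [MeasurableSpace X] {μ : Measure X}

lemma le_dimH_of_measure_le [BorelSpace X] {E : Set X} (hE : μ E ≠ 0) {s C : ℝ≥0} {δ : ℝ≥0∞}
    (hδ : 0 < δ)
    (hμ : ∀ A, Metric.ediam A ≤ δ → μ A ≤ C * Metric.ediam A ^ (s : ℝ)) : s ≤ dimH E := by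
  have hC : ((C + 1 : ℝ≥0) : ℝ≥0∞) ≠ 0 := by simp
  have le_hausdorff : ((C + 1 : ℝ≥0) : ℝ≥0∞)⁻¹ • μ ≤ Measure.hausdorffMeasure s := by
    refine Measure.le_hausdorffMeasure s _ δ hδ fun A hA => ?_
    rw [Measure.smul_apply, smul_eq_mul, ENNReal.inv_mul_le_iff hC ENNReal.coe_ne_top]
    refine (hμ A hA).trans ?_
    gcongr
    exact le_self_add
  refine le_dimH_of_hausdorffMeasure_ne_zero fun h_zero => hE ?_
  simpa [h_zero] using le_hausdorff E

lemma measure_le_mul_ediam_rpow {ρ s C : ℝ≥0} (hρ₀ : 0 < ρ) (hρ₁ : ρ < 1) (hs : 0 < s)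
    (hμ : ∀ (n : ℕ) (A : Set X), IsClosed A → Metric.ediam A ≤ (ρ ^ n : ℝ≥0) →
      μ A ≤ (C * (ρ ^ n) ^ (s : ℝ) : ℝ≥0)) {A : Set X} (hA : Metric.ediam A ≤ 1) :
    μ A ≤ (C * (ρ ^ (s : ℝ))⁻¹ : ℝ≥0) * Metric.ediam A ^ (s : ℝ) := by
  lift Metric.ediam A to ℝ≥0 using ne_top_of_le_ne_top ENNReal.one_ne_top hA with d hd
  have measure_le (n : ℕ) (hn : d ≤ ρ ^ n) : μ A ≤ (C * (ρ ^ n) ^ (s : ℝ) : ℝ≥0) :=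
    (measure_mono subset_closure).trans <| hμ n _ isClosed_closure <| by
      rw [Metric.ediam_closure, ← hd]; exact_mod_cast hn
  rw [← ENNReal.coe_rpow_of_nonneg _ s.coe_nonneg, ← ENNReal.coe_mul]
  rcases eq_zero_or_pos d with rfl | hd_pos
  · have scale_tendsto : Tendsto (fun n : ℕ => C * (ρ ^ n) ^ (s : ℝ)) atTop (𝓝 (C * 0)) := by
      refine Tendsto.const_mul C ?_
      simpa only [NNReal.zero_rpow (NNReal.coe_pos.2 hs).ne'] using
        (NNReal.tendsto_pow_atTop_nhds_zero_of_lt_one hρ₁).nnrpow tendsto_const_nhds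
          (Or.inr (NNReal.coe_pos.2 hs))
    have := ge_of_tendsto' (ENNReal.tendsto_coe.2 scale_tendsto) fun n => measure_le n zero_le
    exact this.trans (by simp)
  · have hd_one : d ≤ 1 := by exact_mod_cast hA
    obtain ⟨n, hn_lt, hn_le⟩ := exists_nat_pow_near_of_lt_one hd_pos hd_one hρ₀ hρ₁
    refine (measure_le n hn_le).trans (ENNReal.coe_le_coe.2 ?_)
    rw [mul_assoc]
    gcongr
    rw [le_inv_mul_iff₀ (NNReal.rpow_pos hρ₀), ← NNReal.mul_rpow, ← pow_succ']
    gcongr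

end MassDistribution

section Garsia

lemma finite_aeval_of_forall_norm_le {θ : ℝ} (hθ : IsIntegral ℤ θ) (B : ℝ) :
    {y : ℝ | ∃ R : ℤ[X], aeval θ R = y ∧
      ∀ z : ℂ, aeval z (minpoly ℤ θ) = 0 → ‖aeval z R‖ ≤ B}.Finite := by
  let K := IntermediateField.adjoin ℚ {θ}
  have : FiniteDimensional ℚ K := IntermediateField.adjoin.finiteDimensional hθ.tower_top
  have : NumberField K := ⟨⟩
  let g : K := IntermediateField.AdjoinSimple.gen ℚ θ
  have aeval_g (R : ℤ[X]) : algebraMap K ℝ (aeval g R) = aeval θ R := by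
    rw [← aeval_algebraMap_apply, IntermediateField.AdjoinSimple.algebraMap_gen]
  have aeval_embedding (φ : K →+* ℂ) (R : ℤ[X]) : φ (aeval g R) = aeval (φ g) R :=
    (aeval_algHom_apply φ.toIntAlgHom g R).symm
  have g_root : aeval g (minpoly ℤ θ) = 0 :=
    (algebraMap K ℝ).injective (by rw [aeval_g, minpoly.aeval, map_zero])
  have g_integral : IsIntegral ℤ g := ⟨minpoly ℤ θ, minpoly.monic hθ, g_root⟩
  refine ((NumberField.Embeddings.finite_of_norm_le K ℂ B).image (algebraMap K ℝ)).subset ?_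
  rintro _ ⟨R, rfl, hR⟩
  refine ⟨aeval g R, ⟨?_, fun φ => ?_⟩, aeval_g R⟩
  · exact IsIntegral.of_mem_of_fg (Algebra.adjoin ℤ {g}) g_integral.fg_adjoin_singleton _
      (aeval_mem_adjoin_singleton ℤ g)
  · rw [aeval_embedding]
    exact hR _ (by rw [← aeval_embedding, g_root, map_zero])

lemma norm_aeval_le_of_coeff_le {R : ℤ[X]} {H : ℤ} (hR : ∀ n, |R.coeff n| ≤ H) {z : ℂ}
    (hz : ‖z‖ < 1) : ‖aeval z R‖ ≤ H / (1 - ‖z‖) := by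
  have hH : (0 : ℝ) ≤ H := by exact_mod_cast (abs_nonneg _).trans (hR 0)
  calc ‖aeval z R‖ = ‖∑ n ∈ Finset.range (R.natDegree + 1), R.coeff n • z ^ n‖ := by
        rw [aeval_eq_sum_range]
    _ ≤ ∑ n ∈ Finset.range (R.natDegree + 1), H * ‖z‖ ^ n := by
        refine norm_sum_le_of_le _ fun n _ => ?_
        rw [zsmul_eq_mul, norm_mul, norm_pow, Complex.norm_intCast]
        gcongr
        exact_mod_cast hR n
    _ ≤ H * (1 - ‖z‖)⁻¹ := by
        rw [← Finset.mul_sum, ← Nat.Ico_zero_eq_range]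
        gcongr
        simpa using geom_sum_Ico_le_of_lt_one (m := 0) (n := R.natDegree + 1) (norm_nonneg z) hz
    _ = H / (1 - ‖z‖) := (div_eq_mul_inv _ _).symm

lemma finite_aeval_of_isPisot {θ : ℝ} (hθ : IsPisot θ) (H : ℤ) (B : ℝ) :
    {y : ℝ | |y| ≤ B ∧ ∃ R : ℤ[X], aeval θ R = y ∧ ∀ n, |R.coeff n| ≤ H}.Finite := by
  obtain ⟨-, θ_integral, hconj⟩ := hθ
  obtain ⟨B', hB'⟩ := (((minpoly ℤ θ).rootSet_finite ℂ).image fun z => H / (1 - ‖z‖)).bddAbove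
  refine (finite_aeval_of_forall_norm_le θ_integral (max B B')).subset ?_
  rintro y ⟨hy, R, hRy, hR⟩
  refine ⟨R, hRy, fun z hz => ?_⟩
  by_cases hzθ : z = θ
  · rw [hzθ, ← Complex.coe_algebraMap, aeval_algebraMap_apply, hRy, Complex.coe_algebraMap,
      Complex.norm_real]
    exact hy.trans (le_max_left _ _)
  · exact (norm_aeval_le_of_coeff_le hR (hconj z hz hzθ)).trans <| (le_max_right _ _).trans' <|
      hB' ⟨z, mem_rootSet.2 ⟨minpoly.ne_zero θ_integral, hz⟩, rfl⟩

end Garsia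

section Words

variable {lam : ℝ} {p : Fin m → ℕ} {b : Fin m → ℝ} {E : Set ℝ}

lemma wordP_nil : wordP p [] = 0 := rfl

lemma wordP_cons (i : Fin m) (σ : List (Fin m)) : wordP p (i :: σ) = p i + wordP p σ := by
  rw [wordP, List.map_cons, List.sum_cons, wordP]

lemma wordP_append (σ τ : List (Fin m)) : wordP p (σ ++ τ) = wordP p σ + wordP p τ := by
  rw [wordP, List.map_append, List.sum_append, wordP, wordP]

lemma length_le_wordP (hp : ∀ i, 1 ≤ p i) (σ : List (Fin m)) : σ.length ≤ wordP p σ := by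
  simpa [wordP] using List.card_nsmul_le_sum (σ.map p) 1 (by simpa using fun i _ => hp i)

lemma eq_nil_of_wordP_eq_zero (hp : ∀ i, 1 ≤ p i) {σ : List (Fin m)} (hσ : wordP p σ = 0) :
    σ = [] :=
  List.length_eq_zero_iff.1 (Nat.le_zero.1 (hσ ▸ length_le_wordP hp σ))

lemma SW_append (σ τ : List (Fin m)) (x : ℝ) :
    SW lam p b (σ ++ τ) x = SW lam p b σ (SW lam p b τ x) :=
  wordMap_append _ σ τ x

lemma wordB_cons (i : Fin m) (σ : List (Fin m)) :
    wordB lam p b (i :: σ) = lam ^ p i * wordB lam p b σ + b i := rfl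

lemma SW_eq (σ : List (Fin m)) (x : ℝ) :
    SW lam p b σ x = lam ^ wordP p σ * x + wordB lam p b σ := by
  induction σ with
  | nil => simp [SW, wordB, wordP]
  | cons i σ ih =>
    calc SW lam p b (i :: σ) x = lam ^ p i * SW lam p b σ x + b i := rfl
      _ = lam ^ wordP p (i :: σ) * x + wordB lam p b (i :: σ) := by
        rw [ih, wordP_cons, wordB_cons]; ring

lemma continuous_SW (σ : List (Fin m)) : Continuous (SW lam p b σ) := by
  rw [funext (SW_eq σ)]; fun_prop

lemma SW_surjective (hlam : lam ≠ 0) (σ : List (Fin m)) : Function.Surjective (SW lam p b σ) :=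
  fun y => ⟨(y - wordB lam p b σ) / lam ^ wordP p σ, by
    rw [SW_eq, mul_div_cancel₀ _ (pow_ne_zero _ hlam), sub_add_cancel]⟩

lemma isOpenMap_SW (hlam : lam ≠ 0) (σ : List (Fin m)) : IsOpenMap (SW lam p b σ) := by
  rw [funext (SW_eq σ)]
  exact (isOpenMap_add_right _).comp (isOpenMap_smul₀ (pow_ne_zero _ hlam))

lemma dist_SW (hlam : 0 ≤ lam) (σ : List (Fin m)) (x y : ℝ) :
    dist (SW lam p b σ x) (SW lam p b σ y) = lam ^ wordP p σ * dist x y := by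
  rw [SW_eq, SW_eq, dist_add_right, ← smul_eq_mul, ← smul_eq_mul, dist_smul₀, Real.norm_of_nonneg]
  positivity

lemma dist_Smap (hlam : 0 ≤ lam) (i : Fin m) (x y : ℝ) :
    dist (Smap lam p b i x) (Smap lam p b i y) = lam ^ p i * dist x y :=
  (dist_SW hlam [i] x y).trans (by rw [wordP_cons, wordP_nil, add_zero])

lemma prefixList_succ (ω : ℕ → Fin m) (n : ℕ) :
    prefixList ω (n + 1) = prefixList ω n ++ [ω n] := by
  rw [prefixList, List.range_succ, List.map_append]; rfl

lemma length_prefixList (ω : ℕ → Fin m) (n : ℕ) : (prefixList ω n).length = n := by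
  rw [prefixList, List.length_map, List.length_range]

lemma le_wordP_prefixList (hp : ∀ i, 1 ≤ p i) (ω : ℕ → Fin m) (n : ℕ) :
    n ≤ wordP p (prefixList ω n) := by
  simpa only [length_prefixList] using length_le_wordP hp (prefixList ω n)

lemma exists_wordP_prefixList_mem_Ico (hp : ∀ i, 1 ≤ p i) {P : ℕ} (hP : ∀ i, p i ≤ P)
    (ω : ℕ → Fin m) (n : ℕ) : ∃ k, wordP p (prefixList ω k) ∈ Set.Ico n (n + P) := by
  have h_exists : ∃ k, n ≤ wordP p (prefixList ω k) := ⟨n, le_wordP_prefixList hp ω n⟩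
  classical
  refine ⟨Nat.find h_exists, Nat.find_spec h_exists, ?_⟩
  rcases h_find : Nat.find h_exists with _ | k
  · rw [prefixList, List.range_zero, List.map_nil, wordP_nil]
    have := hp (ω 0)
    have := hP (ω 0)
    omega
  · have h_lt : wordP p (prefixList ω k) < n := not_le.1 (Nat.find_min h_exists (by omega))
    rw [prefixList_succ, wordP_append, wordP_cons, wordP_nil]
    have := hP (ω k)
    omega

lemma exists_wordP_mem_Ico_of_mem (hp : ∀ i, 1 ≤ p i) (hE : E = ⋃ i, Smap lam p b i '' E) {P : ℕ}
    (hP : ∀ i, p i ≤ P) (n : ℕ) {x : ℝ} (hx : x ∈ E) :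
    ∃ σ, wordP p σ ∈ Set.Ico n (n + P) ∧ x ∈ SW lam p b σ '' E := by
  obtain ⟨ω, hω⟩ := exists_address hE.subset hx
  obtain ⟨k, hk⟩ := exists_wordP_prefixList_mem_Ico hp hP ω n
  exact ⟨_, hk, hω k⟩

lemma mapsTo_SW (hE : E = ⋃ i, Smap lam p b i '' E) (σ : List (Fin m)) :
    Set.MapsTo (SW lam p b σ) E E :=
  mapsTo_wordMap (fun i _ hx => hE ▸ Set.mem_iUnion.2 ⟨i, Set.mem_image_of_mem _ hx⟩) σ

end Words

section WordPolynomial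

variable {lam : ℝ} {p : Fin m → ℕ} {b : Fin m → ℝ}

lemma exists_int_mul_eq_intCast {ι : Type*} [Finite ι] {b : ι → ℝ}
    (hb : ∀ i, ∃ q : ℚ, b i = q) : ∃ D : ℤ, D ≠ 0 ∧ ∃ z : ι → ℤ, ∀ i, D * b i = z i := by
  choose q hq using hb
  obtain ⟨D, hD⟩ := IsLocalization.exist_integer_multiples_of_finite (nonZeroDivisors ℤ) q
  choose z hz using hD
  refine ⟨D, nonZeroDivisors.coe_ne_zero D, z, fun i => ?_⟩
  have hz_rat : (z i : ℚ) = (D : ℤ) * q i := by simpa using hz i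
  rw [hq]
  exact_mod_cast hz_rat.symm

/-- For integers `z i = D * b i`, the integer polynomial taking the value
`D * wordB lam p b σ * lam⁻¹ ^ wordP p σ` at `lam⁻¹`. -/
def wordPoly (p : Fin m → ℕ) (z : Fin m → ℤ) : List (Fin m) → ℤ[X]
  | [] => 0
  | i :: σ => wordPoly p z σ + C (z i) * X ^ (p i + wordP p σ)

lemma coeff_wordPoly_eq_zero (z : Fin m → ℤ) {σ : List (Fin m)} {n : ℕ} (hn : wordP p σ < n) :
    (wordPoly p z σ).coeff n = 0 := by
  induction σ with
  | nil => exact coeff_zero n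
  | cons i σ ih =>
    rw [wordP_cons] at hn
    rw [wordPoly, coeff_add, ih (by omega), coeff_C_mul_X_pow, if_neg (by omega), add_zero]

lemma abs_coeff_wordPoly_le (hp : ∀ i, 1 ≤ p i) {z : Fin m → ℤ} {Z : ℤ} (hZ₀ : 0 ≤ Z)
    (hZ : ∀ i, |z i| ≤ Z) (σ : List (Fin m)) (n : ℕ) : |(wordPoly p z σ).coeff n| ≤ Z := by
  induction σ with
  | nil => simpa [wordPoly] using hZ₀
  | cons i σ ih =>
    rw [wordPoly, coeff_add, coeff_C_mul_X_pow]
    split_ifs with hn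
    · rw [coeff_wordPoly_eq_zero z (by have := hp i; omega), zero_add]
      exact hZ i
    · rwa [add_zero]

lemma aeval_wordPoly (hlam : lam ≠ 0) {z : Fin m → ℤ} {D : ℤ} (hz : ∀ i, D * b i = z i)
    (σ : List (Fin m)) :
    aeval lam⁻¹ (wordPoly p z σ) = D * wordB lam p b σ * lam⁻¹ ^ wordP p σ := by
  induction σ with
  | nil => simp [wordPoly, wordB, SW]
  | cons i σ ih =>
    rw [wordPoly, map_add, ih, wordB_cons, wordP_cons]
    simp only [map_mul, map_pow, aeval_X, eq_intCast, map_intCast, ← hz i, inv_pow, pow_add]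
    field_simp

lemma aeval_X_pow_mul_wordPoly (hlam : lam ≠ 0) {z : Fin m → ℤ} {D : ℤ}
    (hz : ∀ i, D * b i = z i) {σ : List (Fin m)} {N : ℕ} (hN : wordP p σ ≤ N) :
    aeval lam⁻¹ (X ^ (N - wordP p σ) * wordPoly p z σ) = D * wordB lam p b σ * lam⁻¹ ^ N := by
  rw [map_mul, map_pow, aeval_X, aeval_wordPoly hlam hz, mul_left_comm, ← pow_add,
    Nat.sub_add_cancel hN]

lemma finite_scaled_wordB_sub (hlam : 0 < lam) (hPisot : IsPisot lam⁻¹) (hp : ∀ i, 1 ≤ p i)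
    (hb : ∀ i, ∃ q : ℚ, b i = q) (P : ℕ) (C : ℝ) :
    {t : ℝ | |t| ≤ C ∧ ∃ (n : ℕ) (α β : List (Fin m)), wordP p α ≤ n + P ∧ wordP p β ≤ n + P ∧
      wordB lam p b α - wordB lam p b β = lam ^ n * t}.Finite := by
  obtain ⟨D, hD, z, hz⟩ := exists_int_mul_eq_intCast hb
  have hZ₀ : 0 ≤ ∑ i, |z i| := Finset.sum_nonneg fun i _ => abs_nonneg _
  have hZ (i : Fin m) : |z i| ≤ ∑ i, |z i| :=
    Finset.single_le_sum (f := fun i => |z i|) (fun i _ => abs_nonneg _) (Finset.mem_univ i)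
  have coeff_le (k : ℕ) (σ : List (Fin m)) (n : ℕ) :
      |(X ^ k * wordPoly p z σ).coeff n| ≤ ∑ i, |z i| := by
    rw [coeff_X_pow_mul']
    split_ifs
    · exact abs_coeff_wordPoly_le hp hZ₀ hZ σ _
    · rwa [abs_zero]
  set c : ℝ := D * lam⁻¹ ^ P
  have hc : c ≠ 0 := mul_ne_zero (Int.cast_ne_zero.2 hD) (by positivity)
  have values_finite := finite_aeval_of_isPisot hPisot (2 * ∑ i, |z i|) (|c| * C)
  refine (values_finite.preimage (mul_right_injective₀ hc).injOn).subset ?_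
  rintro t ⟨ht, n, α, β, hα, hβ, hαβ⟩
  refine ⟨by rw [abs_mul]; gcongr, X ^ (n + P - wordP p α) * wordPoly p z α -
    X ^ (n + P - wordP p β) * wordPoly p z β, ?_, fun k => ?_⟩
  · rw [map_sub, aeval_X_pow_mul_wordPoly hlam.ne' hz hα, aeval_X_pow_mul_wordPoly hlam.ne' hz hβ,
      ← sub_mul, ← mul_sub, hαβ, pow_add]
    simp only [c, inv_pow]
    field_simp
  · rw [coeff_sub, two_mul]
    exact (abs_sub _ _).trans (add_le_add (coeff_le _ α k) (coeff_le _ β k))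

end WordPolynomial

section Overlaps

variable {lam : ℝ} {p : Fin m → ℕ} {b : Fin m → ℝ}

/-- Distinct words have distinct maps `SW`; since `SW lam p b σ` is `x ↦ λ^{p_σ} x + b_σ`, this is
phrased through the pair `(p_σ, b_σ)`. -/
def NoExactOverlaps (lam : ℝ) (p : Fin m → ℕ) (b : Fin m → ℝ) : Prop :=
  ∀ α β : List (Fin m), wordP p α = wordP p β → wordB lam p b α = wordB lam p b β → α = β

lemma noExactOverlaps_of_OSC (hlam : lam ≠ 0) (hp : ∀ i, 1 ≤ p i) (hOSC : OSC lam p b) :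
    NoExactOverlaps lam p b := by
  obtain ⟨U, ⟨u, hu⟩, -, hU_sub, hU_disj⟩ := hOSC
  have hU_maps (σ : List (Fin m)) : SW lam p b σ u ∈ U :=
    mapsTo_wordMap (fun i _ hx => hU_sub (Set.mem_iUnion.2 ⟨i, Set.mem_image_of_mem _ hx⟩)) σ hu
  intro α
  induction α with
  | nil => exact fun β hP _ => (eq_nil_of_wordP_eq_zero hp hP.symm).symm
  | cons i α ih =>
    intro β hP hB
    rcases β with _ | ⟨j, β⟩
    · exact eq_nil_of_wordP_eq_zero hp hP
    have h_image : SW lam p b (i :: α) u = SW lam p b (j :: β) u := by rw [SW_eq, SW_eq, hP, hB]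
    obtain rfl : i = j := by
      by_contra hij
      exact (Set.disjoint_iff_inter_eq_empty.2 (hU_disj i j hij)).ne_of_mem
        ⟨_, hU_maps α, rfl⟩ ⟨_, hU_maps β, rfl⟩ h_image
    rw [wordP_cons, wordP_cons] at hP
    rw [wordB_cons, wordB_cons] at hB
    rw [ih β (by omega) (mul_left_cancel₀ (pow_ne_zero _ hlam) (add_right_cancel hB))]

lemma eq_of_prefix_of_wordP_eq (hp : ∀ i, 1 ≤ p i) {α β : List (Fin m)} (hαβ : α <+: β)
    (hP : wordP p α = wordP p β) : α = β := by
  obtain ⟨τ, rfl⟩ := hαβ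
  rw [wordP_append] at hP
  rw [eq_nil_of_wordP_eq_zero hp (by omega : wordP p τ = 0), List.append_nil]

lemma append_ne_append_of_wordP_eq (hp : ∀ i, 1 ≤ p i) {α β : List (Fin m)} (hαβ : α ≠ β)
    (hP : wordP p α = wordP p β) : α ++ β ≠ β ++ α := fun h => by
  have β_prefix : β <+: α ++ β := h ▸ List.prefix_append β α
  rcases List.prefix_or_prefix_of_prefix (List.prefix_append α β) β_prefix with h_pre | h_pre
  · exact hαβ (eq_of_prefix_of_wordP_eq hp h_pre hP)
  · exact hαβ (eq_of_prefix_of_wordP_eq hp h_pre hP.symm).symm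

end Overlaps

section Clustering

variable {lam : ℝ} {p : Fin m → ℕ} {b : Fin m → ℝ} {E : Set ℝ}

/-- The words `σ` of scale `λ^{p_σ}` between `λ^n` and `λ^{n+P}` whose piece `S_σ(E)` of the
attractor meets `A`. -/
def wordsMeeting (lam : ℝ) (p : Fin m → ℕ) (b : Fin m → ℝ) (E : Set ℝ) (P n : ℕ) (A : Set ℝ) :
    Set (List (Fin m)) :=
  {σ | wordP p σ ∈ Set.Ico n (n + P) ∧ (SW lam p b σ '' E ∩ A).Nonempty}

/-- The number of pieces `S_σ(E)` of size comparable to `λ^n` that meet a set of diameter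
`O(λ^n)` is bounded independently of `n` and of the set. -/
def FiniteClustering (lam : ℝ) (p : Fin m → ℕ) (b : Fin m → ℝ) (E : Set ℝ) : Prop :=
  ∀ (P : ℕ) (R : ℝ), ∃ N : ℕ, ∀ (n : ℕ) (A : Set ℝ),
    (∀ x ∈ A, ∀ y ∈ A, dist x y ≤ R * lam ^ n) → (wordsMeeting lam p b E P n A).encard ≤ N

lemma dist_wordB_le_of_le_wordP (hlam₀ : 0 ≤ lam) (hlam₁ : lam ≤ 1) {M : ℝ}
    (hM : ∀ x ∈ E, |x| ≤ M) {n : ℕ} {σ : List (Fin m)} (hσ : n ≤ wordP p σ) {x : ℝ}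
    (hx : x ∈ SW lam p b σ '' E) : dist x (wordB lam p b σ) ≤ M * lam ^ n := by
  obtain ⟨e, he, rfl⟩ := hx
  calc dist (SW lam p b σ e) (SW lam p b σ 0) = |e| * lam ^ wordP p σ := by
        rw [dist_SW hlam₀, Real.dist_0_eq_abs, mul_comm]
    _ ≤ M * lam ^ n :=
        mul_le_mul (hM e he) (pow_le_pow_of_le_one hlam₀ hlam₁ hσ) (by positivity)
          ((abs_nonneg e).trans (hM e he))

lemma finiteClustering_of_isPisot (hlam₀ : 0 < lam) (hlam₁ : lam ≤ 1) (hPisot : IsPisot lam⁻¹)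
    (hp : ∀ i, 1 ≤ p i) (hb : ∀ i, ∃ q : ℚ, b i = q) (hE : Bornology.IsBounded E)
    (hNEO : NoExactOverlaps lam p b) : FiniteClustering lam p b E := by
  intro P R
  obtain ⟨M, hM⟩ := hE.exists_norm_le
  have hG := finite_scaled_wordB_sub hlam₀ hPisot hp hb P (M + R + M)
  set G := {t : ℝ | |t| ≤ M + R + M ∧ ∃ (n : ℕ) (α β : List (Fin m)), wordP p α ≤ n + P ∧
    wordP p β ≤ n + P ∧ wordB lam p b α - wordB lam p b β = lam ^ n * t}
  refine ⟨(Set.Iio P ×ˢ G).ncard, fun n A hA => ?_⟩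
  rcases (wordsMeeting lam p b E P n A).eq_empty_or_nonempty with h_empty | ⟨τ, hτ, y, hyτ, hyA⟩
  · simp [h_empty]
  have hn : 0 < lam ^ n := pow_pos hlam₀ n
  rw [((Set.finite_Iio P).prod hG).cast_ncard_eq]
  refine Set.encard_le_encard_of_injOn
    (f := fun σ => (wordP p σ - n, (wordB lam p b σ - wordB lam p b τ) / lam ^ n)) ?_ ?_
  · rintro σ ⟨hσ, x, hxσ, hxA⟩
    refine ⟨by have := hσ.1; have := hσ.2; simp only [Set.mem_Iio]; omega,
      ?_, n, σ, τ, hσ.2.le, hτ.2.le, (mul_div_cancel₀ _ hn.ne').symm⟩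
    rw [abs_div, abs_of_pos hn, div_le_iff₀ hn, ← Real.dist_eq]
    calc dist (wordB lam p b σ) (wordB lam p b τ)
        ≤ dist (wordB lam p b σ) x + dist x y + dist y (wordB lam p b τ) := dist_triangle4 _ _ _ _
      _ ≤ M * lam ^ n + R * lam ^ n + M * lam ^ n := by
          gcongr
          · rw [dist_comm]; exact dist_wordB_le_of_le_wordP hlam₀.le hlam₁ hM hσ.1 hxσ
          · exact hA x hxA y hyA
          · exact dist_wordB_le_of_le_wordP hlam₀.le hlam₁ hM hτ.1 hyτ
      _ = (M + R + M) * lam ^ n := by ring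
  · rintro σ ⟨hσ, -⟩ σ' ⟨hσ', -⟩ h_eq
    obtain ⟨hP, hB⟩ := Prod.mk.inj h_eq
    have := hσ.1
    have := hσ'.1
    exact hNEO σ σ' (by omega) (sub_left_injective ((div_left_inj' hn.ne').1 hB))

end Clustering

section CentralOpenSet

variable {lam : ℝ} {p : Fin m → ℕ} {b : Fin m → ℝ} {E : Set ℝ}

/-- The union of the neighbour copies `(S_i ∘ S_τ)⁻¹(S_j(E))`, `i ≠ j`, of the attractor. -/
def neighbourSet (lam : ℝ) (p : Fin m → ℕ) (b : Fin m → ℝ) (E : Set ℝ) : Set ℝ :=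
  {y | ∃ (i j : Fin m) (τ : List (Fin m)), i ≠ j ∧ SW lam p b (i :: τ) y ∈ Smap lam p b j '' E}

/-- The points closer to the attractor than to its neighbour copies; this is the open set
witnessing the open set condition. -/
def centralOpenSet (lam : ℝ) (p : Fin m → ℕ) (b : Fin m → ℝ) (E : Set ℝ) : Set ℝ :=
  {x | Metric.infDist x E < Metric.infDist x (neighbourSet lam p b E)}

lemma exists_forall_image_append_eq {ι : Type*} {F : List ι → Set (List ι)} {N : ℕ}
    (hF : ∀ σ, (F σ).encard ≤ N) (hF_append : ∀ τ σ, (τ ++ ·) '' F σ ⊆ F (τ ++ σ)) :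
    ∃ σ, ∀ τ, F (τ ++ σ) = (τ ++ ·) '' F σ := by
  obtain ⟨σ, hσ⟩ := ENat.exists_eq_iSup_of_lt_top
    ((iSup_le hF).trans_lt (ENat.natCast_lt_top N) : ⨆ σ, (F σ).encard < ⊤)
  have h_max (σ' : List ι) : (F σ').encard ≤ (F σ).encard :=
    hσ ▸ le_iSup (fun σ => (F σ).encard) σ'
  refine ⟨σ, fun τ => ((Set.finite_of_encard_le_coe (hF _)).eq_of_subset_of_encard_le'
    (hF_append τ σ) ?_).symm⟩
  rw [(List.append_right_injective τ).encard_image]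
  exact h_max _

lemma wordsMeeting_image_append_subset (P n : ℕ) (A : Set ℝ) (τ : List (Fin m)) :
    (τ ++ ·) '' wordsMeeting lam p b E P n A ⊆
      wordsMeeting lam p b E P (wordP p τ + n) (SW lam p b τ '' A) := by
  rintro _ ⟨σ, ⟨hσ, _, ⟨e, he, rfl⟩, hA⟩, rfl⟩
  refine ⟨?_, SW lam p b (τ ++ σ) e, ⟨e, he, rfl⟩, SW lam p b σ e, hA, (SW_append τ σ e).symm⟩
  rw [wordP_append]
  exact ⟨by have := hσ.1; omega, by have := hσ.2; omega⟩

lemma exists_cons_wordP_mem_Ico (hp : ∀ i, 1 ≤ p i) (hE : E = ⋃ i, Smap lam p b i '' E) {P : ℕ}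
    (hP : ∀ i, p i ≤ P) {n : ℕ} (hn : 0 < n) {j : Fin m} {x : ℝ} (hx : x ∈ Smap lam p b j '' E) :
    ∃ σ, wordP p (j :: σ) ∈ Set.Ico n (n + P) ∧ x ∈ SW lam p b (j :: σ) '' E := by
  obtain ⟨e, he, rfl⟩ := hx
  rcases le_or_gt n (p j) with hnj | hjn
  · have := hP j
    exact ⟨[], ⟨by rwa [wordP_cons, wordP_nil], by rw [wordP_cons, wordP_nil]; omega⟩, e, he, rfl⟩
  · obtain ⟨σ, hσ, e', he', rfl⟩ := exists_wordP_mem_Ico_of_mem hp hE hP (n - p j) he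
    have := hσ.1
    have := hσ.2
    exact ⟨σ, ⟨by rw [wordP_cons]; omega, by rw [wordP_cons]; omega⟩, e', he', rfl⟩

/-- If `σ` maximizes the number of pieces met by `S_σ(A)` at its own scale, then prepending a word
`i :: τ` produces no new pieces, so no piece starting with `j ≠ i` meets `S_{iτσ}(A)`. -/
lemma exists_disjoint_image_neighbourSet (hlam : 0 ≤ lam) (hp : ∀ i, 1 ≤ p i)
    (hE : E = ⋃ i, Smap lam p b i '' E) (hFC : FiniteClustering lam p b E) {A : Set ℝ}
    (hA : Bornology.IsBounded A) :
    ∃ σ, Disjoint (SW lam p b σ '' A) (neighbourSet lam p b E) := by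
  set P := ∑ i, p i
  have hP (i : Fin m) : p i ≤ P := Finset.single_le_sum_of_canonicallyOrdered (Finset.mem_univ i)
  let F (σ : List (Fin m)) := wordsMeeting lam p b E P (wordP p σ) (SW lam p b σ '' A)
  obtain ⟨N, hN⟩ := hFC P (Metric.diam A)
  have hF (σ : List (Fin m)) : (F σ).encard ≤ N := by
    refine hN _ _ ?_
    rintro _ ⟨x, hx, rfl⟩ _ ⟨y, hy, rfl⟩
    rw [dist_SW hlam, mul_comm]
    gcongr
    exact Metric.dist_le_diam_of_mem hA hx hy
  have hF_append (τ σ : List (Fin m)) : (τ ++ ·) '' F σ ⊆ F (τ ++ σ) := by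
    have h_image : SW lam p b (τ ++ σ) '' A = SW lam p b τ '' (SW lam p b σ '' A) := by
      rw [Set.image_image, funext (SW_append τ σ)]
    simp only [F, wordP_append, h_image]
    exact wordsMeeting_image_append_subset _ _ _ τ
  obtain ⟨σ, hσ⟩ := exists_forall_image_append_eq hF hF_append
  refine ⟨σ, Set.disjoint_left.2 ?_⟩
  rintro _ ⟨a, ha, rfl⟩ ⟨i, j, τ, hij, hmem⟩
  rw [← SW_append] at hmem
  have scale_pos : 0 < wordP p (i :: τ ++ σ) := by
    rw [List.cons_append, wordP_cons]
    have := hp i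
    omega
  obtain ⟨α, hα, hα_mem⟩ := exists_cons_wordP_mem_Ico hp hE hP scale_pos hmem
  have h_word : j :: α ∈ F (i :: τ ++ σ) := ⟨hα, _, hα_mem, a, ha, rfl⟩
  rw [hσ] at h_word
  obtain ⟨α', -, h_eq⟩ := h_word
  exact hij (List.cons.inj h_eq).1

lemma neighbourSet_nonempty [Nontrivial (Fin m)] (hlam : lam ≠ 0) (hE : E.Nonempty) :
    (neighbourSet lam p b E).Nonempty := by
  obtain ⟨i, j, hij⟩ := exists_pair_ne (Fin m)
  obtain ⟨e, he⟩ := hE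
  obtain ⟨y, hy⟩ := SW_surjective (p := p) (b := b) hlam [i] (Smap lam p b j e)
  exact ⟨y, i, j, [], hij, e, he, hy.symm⟩

lemma centralOpenSet_nonempty [Nontrivial (Fin m)] (hlam : 0 < lam) (hp : ∀ i, 1 ≤ p i)
    (hE_bdd : Bornology.IsBounded E) (hE_ne : E.Nonempty) (hE : E = ⋃ i, Smap lam p b i '' E)
    (hFC : FiniteClustering lam p b E) : (centralOpenSet lam p b E).Nonempty := by
  obtain ⟨σ, hσ⟩ := exists_disjoint_image_neighbourSet hlam.le hp hE hFC
    (hE_bdd.thickening (δ := 1))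
  obtain ⟨e, he⟩ := hE_ne
  have image_open := isOpenMap_SW (p := p) (b := b) hlam.ne' σ _
    (Metric.isOpen_thickening (δ := 1) (E := E))
  have notMem_closure : SW lam p b σ e ∉ closure (neighbourSet lam p b E) :=
    (hσ.closure_right image_open).notMem_of_mem_left
      ⟨e, Metric.self_subset_thickening one_pos E he, rfl⟩
  refine ⟨SW lam p b σ e, ?_⟩
  rw [centralOpenSet, Set.mem_ofPred_eq, Metric.infDist_zero_of_mem (mapsTo_SW hE σ he)]
  exact (Metric.infDist_pos_iff_notMem_closure (neighbourSet_nonempty hlam.ne' ⟨e, he⟩)).1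
    notMem_closure

lemma infDist_Smap_le (hlam : 0 ≤ lam) (hE_ne : E.Nonempty) {i : Fin m}
    (hE : Set.MapsTo (Smap lam p b i) E E) (x : ℝ) :
    Metric.infDist (Smap lam p b i x) E ≤ lam ^ p i * Metric.infDist x E := by
  have := hE_ne.to_subtype
  rw [Metric.infDist_eq_iInf (s := E) (x := x), Real.mul_iInf_of_nonneg (by positivity)]
  exact le_ciInf fun e => dist_Smap hlam i x e ▸ Metric.infDist_le_dist_of_mem (hE e.2)

lemma mul_infDist_neighbourSet_le [Nontrivial (Fin m)] (hlam : 0 < lam) (hE : E.Nonempty)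
    (k : Fin m) (x : ℝ) :
    lam ^ p k * Metric.infDist x (neighbourSet lam p b E) ≤
      Metric.infDist (Smap lam p b k x) (neighbourSet lam p b E) := by
  refine (Metric.le_infDist (neighbourSet_nonempty hlam.ne' hE)).2 ?_
  rintro y ⟨i, j, τ, hij, hy⟩
  obtain ⟨z, rfl⟩ := SW_surjective (p := p) (b := b) hlam.ne' [k] y
  rw [← SW_append] at hy
  calc lam ^ p k * Metric.infDist x (neighbourSet lam p b E)
      ≤ lam ^ p k * dist x z := by
        gcongr; exact Metric.infDist_le_dist_of_mem ⟨i, j, τ ++ [k], hij, hy⟩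
    _ = dist (Smap lam p b k x) (Smap lam p b k z) := (dist_Smap hlam.le k x z).symm

lemma mul_infDist_neighbourSet_le_of_Smap_eq (hlam : 0 < lam) (hE : E.Nonempty) {i j : Fin m}
    (hij : i ≠ j) {x y : ℝ} (hxy : Smap lam p b i x = Smap lam p b j y) :
    lam ^ p i * Metric.infDist x (neighbourSet lam p b E) ≤ lam ^ p j * Metric.infDist y E := by
  have := hE.to_subtype
  rw [Metric.infDist_eq_iInf (s := E), Real.mul_iInf_of_nonneg (by positivity)]
  refine le_ciInf fun e => ?_
  obtain ⟨z, hz⟩ := SW_surjective (p := p) (b := b) hlam.ne' [i] (Smap lam p b j e)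
  calc lam ^ p i * Metric.infDist x (neighbourSet lam p b E)
      ≤ lam ^ p i * dist x z := by
        gcongr; exact Metric.infDist_le_dist_of_mem ⟨i, j, [], hij, e, e.2, hz.symm⟩
    _ = dist (Smap lam p b i x) (Smap lam p b i z) := (dist_Smap hlam.le i x z).symm
    _ = dist (Smap lam p b j y) (Smap lam p b j e) := by rw [hxy, ← hz]; rfl
    _ = lam ^ p j * dist y e := dist_Smap hlam.le j y e

lemma mapsTo_Smap_centralOpenSet [Nontrivial (Fin m)] (hlam : 0 < lam) (hE_ne : E.Nonempty)
    {i : Fin m} (hE : Set.MapsTo (Smap lam p b i) E E) :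
    Set.MapsTo (Smap lam p b i) (centralOpenSet lam p b E) (centralOpenSet lam p b E) := by
  intro x hx
  calc Metric.infDist (Smap lam p b i x) E
      ≤ lam ^ p i * Metric.infDist x E := infDist_Smap_le hlam.le hE_ne hE x
    _ < lam ^ p i * Metric.infDist x (neighbourSet lam p b E) :=
        mul_lt_mul_of_pos_left hx (pow_pos hlam _)
    _ ≤ Metric.infDist (Smap lam p b i x) (neighbourSet lam p b E) :=
        mul_infDist_neighbourSet_le hlam hE_ne i x

lemma disjoint_Smap_image_centralOpenSet (hlam : 0 < lam) (hE : E.Nonempty) {i j : Fin m}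
    (hij : i ≠ j) : Disjoint (Smap lam p b i '' centralOpenSet lam p b E)
      (Smap lam p b j '' centralOpenSet lam p b E) := by
  have key {i j : Fin m} (hij : i ≠ j) {x y : ℝ} (hx : x ∈ centralOpenSet lam p b E)
      (hxy : Smap lam p b i x = Smap lam p b j y) :
      lam ^ p i * Metric.infDist x E < lam ^ p j * Metric.infDist y E :=
    (mul_lt_mul_of_pos_left hx (pow_pos hlam _)).trans_le
      (mul_infDist_neighbourSet_le_of_Smap_eq hlam hE hij hxy)
  rw [Set.disjoint_left]
  rintro _ ⟨x, hx, rfl⟩ ⟨y, hy, hxy⟩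
  exact lt_asymm (key hij hx hxy.symm) (key hij.symm hy hxy)

theorem OSC_of_finiteClustering [Nontrivial (Fin m)] (hlam : 0 < lam) (hp : ∀ i, 1 ≤ p i)
    (hE_bdd : Bornology.IsBounded E) (hE_ne : E.Nonempty) (hE : E = ⋃ i, Smap lam p b i '' E)
    (hFC : FiniteClustering lam p b E) : OSC lam p b :=
  ⟨centralOpenSet lam p b E, centralOpenSet_nonempty hlam hp hE_bdd hE_ne hE hFC,
    isOpen_lt (Metric.continuous_infDist_pt _) (Metric.continuous_infDist_pt _),
    Set.iUnion_subset fun i => (mapsTo_Smap_centralOpenSet hlam hE_ne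
      (mapsTo_SW hE [i])).image_subset,
    fun _ _ hij => (disjoint_Smap_image_centralOpenSet hlam hE_ne hij).inter_eq⟩

end CentralOpenSet

section DimensionUpperBound

variable {p : Fin m → ℕ} {b : Fin m → ℝ} {E : Set ℝ} {ρ s : ℝ≥0}

lemma lipschitzWith_Smap (ρ : ℝ≥0) (p : Fin m → ℕ) (b : Fin m → ℝ) (i : Fin m) :
    LipschitzWith (ρ ^ p i) (Smap ρ p b i) :=
  .of_dist_le_mul fun x y => by rw [dist_Smap ρ.coe_nonneg, NNReal.coe_pow]

theorem dimH_le_of_sum_rpow_eq_one (hρ : ρ < 1) (hp : ∀ i, 1 ≤ p i) (hE_bdd : Bornology.IsBounded E)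
    (hE : E = ⋃ i, Smap ρ p b i '' E) (hsum : ∑ i, (ρ ^ p i) ^ (s : ℝ) = 1) : dimH E ≤ s :=
  dimH_le_of_subset_iUnion_image (lipschitzWith_Smap ρ p b)
    (fun i => pow_lt_one₀ zero_le hρ (Nat.one_le_iff_ne_zero.1 (hp i))) hE_bdd.ediam_ne_top
    hE.subset hsum.le

theorem noExactOverlaps_of_le_dimH (hρ₀ : 0 < ρ) (hρ₁ : ρ < 1) (hp : ∀ i, 1 ≤ p i)
    (hE_bdd : Bornology.IsBounded E) (hE : E = ⋃ i, Smap ρ p b i '' E) (hs : 0 < s)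
    (hsum : ∑ i, (ρ ^ p i) ^ (s : ℝ) = 1) (hdim : s ≤ dimH E) : NoExactOverlaps ρ p b := by
  intro α β hP hB
  by_contra hαβ
  have SW_eq_SW : SW ρ p b α = SW ρ p b β := funext fun x => by rw [SW_eq, SW_eq, hP, hB]
  obtain ⟨v, hv⟩ : ∃ v : Fin (α ++ β).length → Fin m, List.ofFn v = α ++ β :=
    ⟨_, List.ofFn_get _⟩
  obtain ⟨w, hw⟩ : ∃ w : Fin (α ++ β).length → Fin m, List.ofFn w = β ++ α := by
    rw [List.length_append, Nat.add_comm, ← List.length_append]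
    exact ⟨_, List.ofFn_get _⟩
  have hvw : v ≠ w := by
    rintro rfl
    exact append_ne_append_of_wordP_eq hp hαβ hP (hv.symm.trans hw)
  refine hdim.not_gt (dimH_lt_of_wordMap_image_eq (lipschitzWith_Smap ρ p b)
    (fun i => pow_pos hρ₀ _) (fun i => pow_lt_one₀ zero_le hρ₁ (Nat.one_le_iff_ne_zero.1 (hp i)))
    hE_bdd.ediam_ne_top hE.subset hs hsum hvw ?_)
  change SW ρ p b _ '' E = SW ρ p b _ '' E
  rw [hv, hw, funext (SW_append α β), funext (SW_append β α), SW_eq_SW]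

end DimensionUpperBound

section DimensionLowerBound

variable {lam : ℝ} {p : Fin m → ℕ} {b : Fin m → ℝ} {E : Set ℝ}

lemma exists_forall_mem_image_SW (hE_cpt : IsCompact E) (hE_ne : E.Nonempty)
    (hE : E = ⋃ i, Smap lam p b i '' E) (ω : ℕ → Fin m) :
    ∃ x, ∀ n, x ∈ SW lam p b (prefixList ω n) '' E := by
  let piece (n : ℕ) := SW lam p b (prefixList ω n) '' E
  have piece_compact (n : ℕ) : IsCompact (piece n) := hE_cpt.image (continuous_SW _)
  have piece_antitone (n : ℕ) : piece (n + 1) ⊆ piece n := by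
    rintro _ ⟨e, he, rfl⟩
    rw [prefixList_succ, SW_append]
    exact ⟨_, mapsTo_SW hE [ω n] he, rfl⟩
  obtain ⟨x, hx⟩ := IsCompact.nonempty_iInter_of_sequence_nonempty_isCompact_isClosed piece
    piece_antitone (fun n => hE_ne.image _) (piece_compact 0) (fun n => (piece_compact n).isClosed)
  exact ⟨x, Set.mem_iInter.1 hx⟩

lemma prefixList_eq_prefixList_iff {ω ω' : ℕ → Fin m} {n : ℕ} :
    prefixList ω n = prefixList ω' n ↔ ∀ k < n, ω k = ω' k := by
  simp only [prefixList, List.map_inj_left, List.mem_range]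

lemma eventually_prefixList_eq (ω : ℕ → Fin m) (n : ℕ) :
    ∀ᶠ ω' in 𝓝 ω, prefixList ω' n = prefixList ω n := by
  simp only [prefixList_eq_prefixList_iff]
  refine (eventually_all_finite (Set.finite_Iio n)).2 fun k _ => ?_
  have coord_tendsto : Tendsto (fun ω' : ℕ → Fin m => ω' k) (𝓝 ω) (pure (ω k)) :=
    nhds_discrete (Fin m) ▸ (continuous_apply k).tendsto ω
  exact tendsto_pure.1 coord_tendsto

lemma continuous_of_forall_mem_image_SW (hlam₀ : 0 ≤ lam) (hlam₁ : lam < 1) (hp : ∀ i, 1 ≤ p i)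
    (hE : Bornology.IsBounded E) {π : (ℕ → Fin m) → ℝ}
    (hπ : ∀ ω n, π ω ∈ SW lam p b (prefixList ω n) '' E) : Continuous π := by
  rw [continuous_iff_continuousAt]
  refine fun ω => Metric.continuousAt_iff'.2 fun ε hε => ?_
  have diam_tendsto : Tendsto (fun n : ℕ => lam ^ n * Metric.diam E) atTop (𝓝 0) := by
    simpa using (tendsto_pow_atTop_nhds_zero_of_lt_one hlam₀ hlam₁).mul_const (Metric.diam E)
  obtain ⟨n, hn⟩ := (diam_tendsto.eventually_lt_const hε).exists
  filter_upwards [eventually_prefixList_eq ω n] with ω' hω'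
  obtain ⟨x, hx, hx_eq⟩ := hπ ω' n
  obtain ⟨y, hy, hy_eq⟩ := hπ ω n
  calc dist (π ω') (π ω) = lam ^ wordP p (prefixList ω n) * dist x y := by
        rw [← hx_eq, ← hy_eq, hω', dist_SW hlam₀]
    _ ≤ lam ^ n * Metric.diam E :=
        mul_le_mul (pow_le_pow_of_le_one hlam₀ hlam₁.le (le_wordP_prefixList hp ω n))
          (Metric.dist_le_diam_of_mem hE hx hy) dist_nonneg (by positivity)
    _ < ε := hn

lemma exists_measure_prefixList_eq_le {q : Fin m → ℝ≥0} (hq : ∑ i, q i = 1) :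
    ∃ μ : Measure (ℕ → Fin m), IsProbabilityMeasure μ ∧
      ∀ σ, μ {ω | prefixList ω σ.length = σ} ≤ (σ.map q).prod := by
  let weights : PMF (Fin m) := PMF.ofFintype (fun i => q i) (by exact_mod_cast hq)
  let μ : Measure (ℕ → Fin m) := Measure.infinitePi fun _ => weights.toMeasure
  have cylinder_eq (ω₀ : ℕ → Fin m) (n : ℕ) : {ω | prefixList ω n = prefixList ω₀ n} =
      Set.pi (Finset.range n) fun k => {ω₀ k} := by
    ext ω
    simp [prefixList_eq_prefixList_iff]
  have measure_cylinder (ω₀ : ℕ → Fin m) (n : ℕ) :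
      μ {ω | prefixList ω n = prefixList ω₀ n} = ((prefixList ω₀ n).map q).prod :=
    calc μ {ω | prefixList ω n = prefixList ω₀ n}
        = ∏ k ∈ Finset.range n, weights.toMeasure {ω₀ k} := by
          rw [cylinder_eq, Measure.infinitePi_pi _ fun _ _ => .singleton _]
      _ = ((∏ k ∈ Finset.range n, q (ω₀ k) : ℝ≥0) : ℝ≥0∞) := by
          simp [weights]
      _ = ((prefixList ω₀ n).map q).prod := by
          rw [prefixList, List.map_map]; rfl
  refine ⟨μ, inferInstance, fun σ => ?_⟩
  rcases {ω : ℕ → Fin m | prefixList ω σ.length = σ}.eq_empty_or_nonempty with h_empty | ⟨ω₀, hω₀⟩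
  · simp [h_empty]
  · obtain ⟨n, rfl⟩ : ∃ n, σ = prefixList ω₀ n := ⟨_, hω₀.symm⟩
    rw [length_prefixList, measure_cylinder]

lemma prod_map_pow_rpow (ρ : ℝ≥0) (s : ℝ) (σ : List (Fin m)) :
    (σ.map fun i => (ρ ^ p i) ^ s).prod = (ρ ^ wordP p σ) ^ s := by
  induction σ with
  | nil => simp [wordP_nil]
  | cons i σ ih => rw [List.map_cons, List.prod_cons, ih, wordP_cons, pow_add, NNReal.mul_rpow]

lemma measure_preimage_le_of_encard_wordsMeeting_le {ρ s : ℝ≥0} (hρ : ρ ≤ 1)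
    (hp : ∀ i, 1 ≤ p i) {μ : Measure (ℕ → Fin m)}
    (hμ : ∀ σ, μ {ω | prefixList ω σ.length = σ} ≤ ((ρ ^ wordP p σ) ^ (s : ℝ) : ℝ≥0))
    {π : (ℕ → Fin m) → ℝ} (hπ : ∀ ω n, π ω ∈ SW ρ p b (prefixList ω n) '' E) {P N n : ℕ}
    (hP : ∀ i, p i ≤ P) {A : Set ℝ} (hN : (wordsMeeting ρ p b E P n A).encard ≤ N) :
    μ (π ⁻¹' A) ≤ (N * (ρ ^ n) ^ (s : ℝ) : ℝ≥0) := by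
  have words_finite := Set.finite_of_encard_le_coe hN
  set J := words_finite.toFinset
  have J_card : J.card ≤ N := by
    rwa [words_finite.encard_eq_coe_toFinset_card, Nat.cast_le] at hN
  have cover : π ⁻¹' A ⊆ ⋃ σ ∈ J, {ω | prefixList ω σ.length = σ} := fun ω hω => by
    obtain ⟨k, hk⟩ := exists_wordP_prefixList_mem_Ico hp hP ω n
    refine Set.mem_biUnion (x := prefixList ω k)
      (words_finite.mem_toFinset.2 ⟨hk, π ω, hπ ω k, hω⟩) ?_
    rw [Set.mem_ofPred_eq, length_prefixList]
  have cylinder_le (σ) (hσ : σ ∈ J) :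
      μ {ω | prefixList ω σ.length = σ} ≤ ((ρ ^ n) ^ (s : ℝ) : ℝ≥0) := by
    refine (hμ σ).trans (ENNReal.coe_le_coe.2 ?_)
    gcongr ?_ ^ _
    exact pow_le_pow_of_le_one zero_le hρ (words_finite.mem_toFinset.1 hσ).1.1
  calc μ (π ⁻¹' A) ≤ ∑ σ ∈ J, μ {ω | prefixList ω σ.length = σ} :=
        (measure_mono cover).trans (measure_biUnion_finset_le _ _)
    _ ≤ J.card • (((ρ ^ n) ^ (s : ℝ) : ℝ≥0) : ℝ≥0∞) := Finset.sum_le_card_nsmul _ _ _ cylinder_le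
    _ ≤ (N * (ρ ^ n) ^ (s : ℝ) : ℝ≥0) := by
        rw [nsmul_eq_mul, ENNReal.coe_mul, ENNReal.coe_natCast]
        gcongr

theorem le_dimH_of_finiteClustering {ρ s : ℝ≥0} (hρ₀ : 0 < ρ) (hρ₁ : ρ < 1) (hp : ∀ i, 1 ≤ p i)
    (hE_cpt : IsCompact E) (hE_ne : E.Nonempty) (hE : E = ⋃ i, Smap ρ p b i '' E)
    (hs : 0 < s) (hsum : ∑ i, (ρ ^ p i) ^ (s : ℝ) = 1) (hFC : FiniteClustering ρ p b E) :
    s ≤ dimH E := by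
  choose π hπ using exists_forall_mem_image_SW hE_cpt hE_ne hE
  have π_measurable : Measurable π := (continuous_of_forall_mem_image_SW ρ.coe_nonneg
    (by exact_mod_cast hρ₁) hp hE_cpt.isBounded hπ).measurable
  obtain ⟨μ, μ_prob, hμ⟩ := exists_measure_prefixList_eq_le hsum
  simp only [prod_map_pow_rpow] at hμ
  obtain ⟨N, hN⟩ := hFC (∑ i, p i) 1
  have hP (i : Fin m) : p i ≤ ∑ i, p i :=
    Finset.single_le_sum_of_canonicallyOrdered (Finset.mem_univ i)
  have map_le (n : ℕ) (A : Set ℝ) (hA_closed : IsClosed A)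
      (hA : Metric.ediam A ≤ (ρ ^ n : ℝ≥0)) : μ.map π A ≤ (N * (ρ ^ n) ^ (s : ℝ) : ℝ≥0) := by
    rw [Measure.map_apply π_measurable hA_closed.measurableSet]
    refine measure_preimage_le_of_encard_wordsMeeting_le hρ₁.le hp hμ hπ hP
      (hN n A fun x hx y hy => ?_)
    rw [one_mul]
    have := (Metric.edist_le_ediam_of_mem hx hy).trans hA
    rw [edist_nndist] at this
    exact_mod_cast this
  have map_E : μ.map π E ≠ 0 := by
    have preimage_eq : π ⁻¹' E = Set.univ := Set.eq_univ_of_forall fun ω =>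
      Set.image_subset_iff.2 (mapsTo_SW hE _) (hπ ω 0)
    simp [Measure.map_apply π_measurable hE_cpt.measurableSet, preimage_eq]
  exact le_dimH_of_measure_le map_E one_pos fun A hA =>
    measure_le_mul_ediam_rpow hρ₀ hρ₁ hs map_le hA

end DimensionLowerBound

theorem stmt13 (lam : ℝ) (hlam0 : 0 < lam) (hlam1 : lam < 1)
    (hPisot : IsPisot lam⁻¹)
    {m : ℕ} (hm : 2 ≤ m) (p : Fin m → ℕ) (hp : ∀ i, 1 ≤ p i)
    (b : Fin m → ℝ) (hbQ : ∀ i, ∃ q : ℚ, b i = (q : ℝ))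
    (E : Set ℝ) (hEc : IsCompact E) (hEne : E.Nonempty)
    (hEfix : E = ⋃ i, Smap lam p b i '' E)
    (s : ℝ) (hs : 0 < s) (hsum : ∑ i : Fin m, lam ^ ((p i : ℝ) * s) = 1) :
    dimH E = ENNReal.ofReal s ↔ OSC lam p b := by
  have : Nontrivial (Fin m) := Fin.nontrivial_iff_two_le.2 hm
  have clustering (hNEO : NoExactOverlaps lam p b) : FiniteClustering lam p b E :=
    finiteClustering_of_isPisot hlam0 hlam1.le hPisot hp hbQ hEc.isBounded hNEO
  lift lam to ℝ≥0 using hlam0.le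
  lift s to ℝ≥0 using hs.le
  have hsum' : ∑ i, (lam ^ p i) ^ (s : ℝ) = 1 := by
    rw [← NNReal.coe_inj, NNReal.coe_one, ← hsum, NNReal.coe_sum]
    simp only [NNReal.coe_rpow, NNReal.coe_pow, Real.rpow_mul lam.coe_nonneg, Real.rpow_natCast]
  norm_cast at hlam0 hlam1 hs
  rw [ENNReal.ofReal_coe_nnreal]
  constructor
  · intro hdim
    exact OSC_of_finiteClustering hlam0 hp hEc.isBounded hEne hEfix <| clustering <|
      noExactOverlaps_of_le_dimH hlam0 hlam1 hp hEc.isBounded hEfix hs hsum' hdim.ge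
  · intro hOSC
    exact (dimH_le_of_sum_rpow_eq_one hlam1 hp hEc.isBounded hEfix hsum').antisymm <|
      le_dimH_of_finiteClustering hlam0 hlam1 hp hEc hEne hEfix hs hsum' <|
        clustering (noExactOverlaps_of_OSC (by exact_mod_cast hlam0.ne') hp hOSC)

end PVOSC
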